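/- Positivity of strong solutions of the symmetrizable (Godunov) MHD system (Appendix A, Proposition): Let d ∈ {1,2,3}, γ > 1 and 0 < T ≤ ∞. Suppose ρ, p : ℝ^d × [0, T) → ℝ and v, B : ℝ^d × [0, T) → ℝ³ are continuously differentiable, the velocity v is bounded on ℝ^d × [0, τ] for every τ < T (so that the characteristics dx/dt = v(x, t) are globally defined on [0, τ]), and the conservative state U = (ρ, ρv, B, E) with E = ρ|v|²/2 + |B|²/2 + p/(γ−1) is a classical solution of the symmetrizable MHD system ∂_t U + Σ_{i=1}^{d} ∂_{x_i} F_i(U) = −(Σ_{i=1}^{d} ∂_{x_i} B_i)·S(U) on ℝ^d × (0, T). If ρ(x, 0) > 0 and p(x, 0) > 0 for all x ∈ ℝ^d, then ρ(x, t) > 0 and p(x, t) > 0 for all x ∈ ℝ^d and all t ∈ [0, T) — that is, positivity of density and pressure persists even when the divergence-free condition Σ_i ∂_{x_i} B_i = 0 is violated. -/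

import Mathlib

noncomputable section

open Finset

/-- An MHD state `U = (ρ, m, B, E)` viewed as a vector in `ℝ⁸`. -/
abbrev MHDState := Fin 8 → ℝ

namespace MHD

/-- Build a state from density, momentum, magnetic field, total energy. -/
def mk (ρ : ℝ) (m B : Fin 3 → ℝ) (E : ℝ) : MHDState :=
  ![ρ, m 0, m 1, m 2, B 0, B 1, B 2, E]

/-- Density component. -/
def dens (U : MHDState) : ℝ := U 0

/-- Momentum components. -/
def mom (U : MHDState) : Fin 3 → ℝ := ![U 1, U 2, U 3]

/-- Magnetic field components. -/
def magB (U : MHDState) : Fin 3 → ℝ := ![U 4, U 5, U 6]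

/-- Total energy component. -/
def toten (U : MHDState) : ℝ := U 7

/-- Euclidean dot product on `ℝ³`. -/
def dot3 (a b : Fin 3 → ℝ) : ℝ := ∑ k, a k * b k

/-- Squared Euclidean norm on `ℝ³`. -/
def sq3 (a : Fin 3 → ℝ) : ℝ := dot3 a a

/-- Euclidean norm on `ℝ³`. -/
def norm3 (a : Fin 3 → ℝ) : ℝ := Real.sqrt (sq3 a)

/-- Velocity `v = m / ρ`. -/
def vel (U : MHDState) : Fin 3 → ℝ := fun k => mom U k / dens U

/-- Internal energy `𝓔(U) = E − (|m|²/ρ + |B|²)/2`. -/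
def intE (U : MHDState) : ℝ := toten U - (sq3 (mom U) / dens U + sq3 (magB U)) / 2

/-- Specific internal energy `e = 𝓔(U)/ρ`. -/
def specE (U : MHDState) : ℝ := intE U / dens U

/-- The admissible state set `𝒢`. -/
def Gset : Set MHDState := {U | 0 < dens U ∧ 0 < intE U}

/-- The set `𝒢_ρ` of states with positive density. -/
def Grho : Set MHDState := {U | 0 < dens U}

/-- Euclidean dot product on `ℝ⁸`. -/
def dot8 (U V : MHDState) : ℝ := ∑ i, U i * V i

/-- The vector `n* = (|v*|²/2, −v*, −B*, 1)`. -/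
def nstar (vs Bs : Fin 3 → ℝ) : MHDState :=
  mk (sq3 vs / 2) (fun k => -vs k) (fun k => -Bs k) 1

/-- The set `𝒢*`. -/
def GstarSet : Set MHDState :=
  {U | 0 < dens U ∧ ∀ vs Bs : Fin 3 → ℝ, 0 < dot8 U (nstar vs Bs) + sq3 Bs / 2}

/-- Equation of state assumption: for `ρ > 0`, `e > 0 ↔ p(ρ,e) > 0`. -/
def IsEOS (pfun : ℝ → ℝ → ℝ) : Prop :=
  ∀ ρ e : ℝ, 0 < ρ → (0 < e ↔ 0 < pfun ρ e)

/-- Pressure of a state, via the equation of state. -/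
def pres (pfun : ℝ → ℝ → ℝ) (U : MHDState) : ℝ := pfun (dens U) (specE U)

/-- Total pressure `p + |B|²/2`. -/
def ptot (pfun : ℝ → ℝ → ℝ) (U : MHDState) : ℝ := pres pfun U + sq3 (magB U) / 2

/-- The `i`-th flux `F_i(U)`. -/
def flux (pfun : ℝ → ℝ → ℝ) (i : Fin 3) (U : MHDState) : MHDState :=
  mk (dens U * vel U i)
    (fun k => dens U * vel U i * vel U k - magB U i * magB U k
      + ptot pfun U * (if k = i then 1 else 0))
    (fun k => vel U i * magB U k - magB U i * vel U k)
    (vel U i * (toten U + ptot pfun U) - magB U i * dot3 (vel U) (magB U))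

/-- Directional inner product `⟨ξ, w⟩ = Σ_{k<d} ξ_k w_k` for `ξ ∈ ℝ^d`, `w ∈ ℝ³`, `d ≤ 3`. -/
def dirDot {d : ℕ} (hd : d ≤ 3) (ξ : Fin d → ℝ) (w : Fin 3 → ℝ) : ℝ :=
  ∑ k, ξ k * w (Fin.castLE hd k)

/-- Directional flux `⟨ξ, F(U)⟩ = Σ_{i<d} ξ_i F_i(U)`. -/
def dirFlux (pfun : ℝ → ℝ → ℝ) {d : ℕ} (hd : d ≤ 3) (ξ : Fin d → ℝ) (U : MHDState) :
    MHDState :=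
  ∑ i, ξ i • flux pfun (Fin.castLE hd i) U

/-- `ξ` is a unit vector. -/
def unitVec {d : ℕ} (ξ : Fin d → ℝ) : Prop := (∑ k, (ξ k) ^ 2) = 1

/-- `𝒞_s(U) = p / (ρ √(2e))`. -/
def soundC (pfun : ℝ → ℝ → ℝ) (U : MHDState) : ℝ :=
  pres pfun U / (dens U * Real.sqrt (2 * specE U))

/-- `𝒞(U; ξ)`. -/
def waveC (pfun : ℝ → ℝ → ℝ) {d : ℕ} (hd : d ≤ 3) (ξ : Fin d → ℝ) (U : MHDState) : ℝ :=
  Real.sqrt ((soundC pfun U ^ 2 + sq3 (magB U) / dens U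
    + Real.sqrt ((soundC pfun U ^ 2 + sq3 (magB U) / dens U) ^ 2
      - 4 * soundC pfun U ^ 2 * dirDot hd ξ (magB U) ^ 2 / dens U)) / 2)

/-- Roe-type averaged velocity `v̄ = (√ρ v + √ρ̃ ṽ)/(√ρ + √ρ̃)`. -/
def roeV (U Ut : MHDState) : Fin 3 → ℝ := fun k =>
  (Real.sqrt (dens U) * vel U k + Real.sqrt (dens Ut) * vel Ut k)
    / (Real.sqrt (dens U) + Real.sqrt (dens Ut))

/-- `α_r(U, Ũ; ξ)`. -/
def alphaR (pfun : ℝ → ℝ → ℝ) {d : ℕ} (hd : d ≤ 3) (ξ : Fin d → ℝ) (U Ut : MHDState) : ℝ :=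
  max (dirDot hd ξ (vel U)) (dirDot hd ξ (roeV U Ut)) + waveC pfun hd ξ U
    + norm3 (magB U - magB Ut) / (Real.sqrt (dens U) + Real.sqrt (dens Ut))

/-- `α_l(U, Ũ; ξ)`. -/
def alphaL (pfun : ℝ → ℝ → ℝ) {d : ℕ} (hd : d ≤ 3) (ξ : Fin d → ℝ) (U Ut : MHDState) : ℝ :=
  min (dirDot hd ξ (vel U)) (dirDot hd ξ (roeV U Ut)) - waveC pfun hd ξ U
    - norm3 (magB U - magB Ut) / (Real.sqrt (dens U) + Real.sqrt (dens Ut))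

/-- `α_⋆(U, Ũ; ξ)`. -/
def alphaS (pfun : ℝ → ℝ → ℝ) {d : ℕ} (hd : d ≤ 3) (ξ : Fin d → ℝ) (U Ut : MHDState) : ℝ :=
  max (|dirDot hd ξ (vel U)|) (|dirDot hd ξ (roeV U Ut)|) + waveC pfun hd ξ U
    + norm3 (magB U - magB Ut) / (Real.sqrt (dens U) + Real.sqrt (dens Ut))

/-- The vector `θ(U, v*, B*) = 2^{−1/2}(B − B*, √ρ(v − v*), √(2ρe)) ∈ ℝ⁷`. -/
def theta (U : MHDState) (vs Bs : Fin 3 → ℝ) : Fin 7 → ℝ :=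
  ![(magB U 0 - Bs 0) / Real.sqrt 2,
    (magB U 1 - Bs 1) / Real.sqrt 2,
    (magB U 2 - Bs 2) / Real.sqrt 2,
    Real.sqrt (dens U) * (vel U 0 - vs 0) / Real.sqrt 2,
    Real.sqrt (dens U) * (vel U 1 - vs 1) / Real.sqrt 2,
    Real.sqrt (dens U) * (vel U 2 - vs 2) / Real.sqrt 2,
    Real.sqrt (2 * intE U) / Real.sqrt 2]

/-- `|θ|²`. -/
def thetaSq (U : MHDState) (vs Bs : Fin 3 → ℝ) : ℝ := ∑ k, theta U vs Bs k ^ 2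

/-- Godunov–Powell source vector `S(U) = (0, B, v, v·B)`. -/
def source (U : MHDState) : MHDState := mk 0 (magB U) (vel U) (dot3 (vel U) (magB U))

/-- HLL numerical flux with clamped wave speeds `σm ≤ 0 ≤ σp`. -/
def hllFlux (pfun : ℝ → ℝ → ℝ) {d : ℕ} (hd : d ≤ 3) (ξ : Fin d → ℝ)
    (Um Up : MHDState) (σm σp : ℝ) : MHDState :=
  (σp - σm)⁻¹ • (σp • dirFlux pfun hd ξ Um - σm • dirFlux pfun hd ξ Up
    + (σm * σp) • (Up - Um))

/-- HLL intermediate state `H(U⁻, U⁺; ξ)`. -/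
def hllMid (pfun : ℝ → ℝ → ℝ) {d : ℕ} (hd : d ≤ 3) (ξ : Fin d → ℝ)
    (Um Up : MHDState) (σm σp : ℝ) : MHDState :=
  (σp - σm)⁻¹ • (σp • Up - dirFlux pfun hd ξ Up - σm • Um + dirFlux pfun hd ξ Um)

/-- The quantity `α̂_j` of Theorem 2.3. -/
def alphaHat (pfun : ℝ → ℝ → ℝ) {d : ℕ} (hd : d ≤ 3) {N : ℕ}
    (s : Fin N → ℝ) (ξ : Fin N → Fin d → ℝ) (U : Fin N → MHDState) (j : Fin N) : ℝ :=
  max (dirDot hd (ξ j) (vel (U j)))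
      ((∑ i, s i)⁻¹ * ∑ i, s i * dirDot hd (fun k => ξ j k - ξ i k) (roeV (U j) (U i)))
  + waveC pfun hd (ξ j) (U j)
  + 2 * (∑ i, s i)⁻¹ * ∑ i, s i *
      (norm3 (magB (U j) - magB (U i)) / (Real.sqrt (dens (U j)) + Real.sqrt (dens (U i))))

def d1le3 : (1 : ℕ) ≤ 3 := by omega
def d2le3 : (2 : ℕ) ≤ 3 := by omega

/-- In one dimension the direction `ξ = 1`. -/
def xi1 : Fin 1 → ℝ := fun _ => 1

/-!
Writing `S = (0, B, v, v·B)` for the Godunov–Powell vector, the flux splits as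
`F_i(U) = v_i U + p_tot (0, e_i, 0, v_i) - B_i S`. Fix a point with velocity `v*` and magnetic
field `B*`, and pair the system with the constant vector `n* = (|v*|²/2, -v*, -B*, 1)`. Then
`n*·U = ρ|v - v*|²/2 + |B - B*|²/2 + p/(γ - 1) - |B*|²/2`, and
`n*·S = (v - v*)·(B - B*) - v*·B*`, so at the chosen point all quadratic remainders have zero
derivative, and the only derivative of `B` left, the one in `-B_i S`, cancels the source
`-(∇·B) S`. Hence `D_t p = -γ (∇·v) p` along the flow of `v`, with no constraint on `∇·B`, while
the first component of the system reads `D_t ρ = -(∇·v) ρ`. On a compact piece of a characteristic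
`∇·v` is bounded, so such linear equations preserve positivity.
The flux recovers `v` as `m/ρ`, so both balance laws are available only where `ρ ≠ 0`; therefore
`ρ > 0` is propagated first, up to a hypothetical first zero.
-/

theorem exp_mul_mul_le_of_neg_mul_le_deriv {a b C : ℝ} {g g' : ℝ → ℝ} (hab : a ≤ b)
    (hg : ContinuousOn g (Set.Icc a b)) (hg' : ∀ s ∈ Set.Ioo a b, HasDerivAt g (g' s) s)
    (hle : ∀ s ∈ Set.Ioo a b, -C * g s ≤ g' s) :
    Real.exp (C * a) * g a ≤ Real.exp (C * b) * g b := by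
  have hderiv : ∀ s ∈ Set.Ioo a b, HasDerivAt (fun s => Real.exp (C * s) * g s)
      (Real.exp (C * s) * (C * g s + g' s)) s := fun s hs =>
    (((hasDerivAt_id s).const_mul C).exp.mul (hg' s hs)).congr_deriv (by simp only [id]; ring)
  refine monotoneOn_of_deriv_nonneg (f := fun s => Real.exp (C * s) * g s) (convex_Icc a b)
    (by fun_prop) ?_ ?_ (Set.left_mem_Icc.2 hab) (Set.right_mem_Icc.2 hab) hab <;>
    rw [interior_Icc] <;> intro s hs
  · exact (hderiv s hs).differentiableAt.differentiableWithinAt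
  · rw [(hderiv s hs).deriv]
    exact mul_nonneg (Real.exp_pos _).le (by linarith [hle s hs])

theorem exists_first_nonpos {a b s : ℝ} {g : ℝ → ℝ} (hg : ContinuousOn g (Set.Icc a b))
    (hs : s ∈ Set.Icc a b) (hgs : g s ≤ 0) :
    ∃ c ∈ Set.Icc a b, g c ≤ 0 ∧ ∀ u ∈ Set.Ico a c, 0 < g u := by
  have hcompact : IsCompact (Set.Icc a b ∩ g ⁻¹' Set.Iic 0) :=
    isCompact_Icc.of_isClosed_subset (hg.preimage_isClosed_of_isClosed isClosed_Icc isClosed_Iic)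
      Set.inter_subset_left
  obtain ⟨c, ⟨hc, hgc⟩, hmin⟩ := hcompact.exists_isLeast ⟨s, hs, hgs⟩
  refine ⟨c, hc, hgc, fun u hu => ?_⟩
  by_contra! hgu
  exact (hmin ⟨⟨hu.1, hu.2.le.trans hc.2⟩, hgu⟩).not_gt hu.2

theorem pos_of_neg_mul_le_deriv_of_pos {a b C : ℝ} {g g' : ℝ → ℝ}
    (hg : ContinuousOn g (Set.Icc a b)) (hg' : ∀ s ∈ Set.Ioo a b, HasDerivAt g (g' s) s)
    (hle : ∀ s ∈ Set.Ioo a b, 0 < g s → -C * g s ≤ g' s) (ha : 0 < g a) :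
    ∀ s ∈ Set.Icc a b, 0 < g s := by
  by_contra! hneg
  obtain ⟨s, hs, hgs⟩ := hneg
  obtain ⟨c, hc, hgc, hpos⟩ := exists_first_nonpos hg hs hgs
  have hlt : ∀ {u}, u ∈ Set.Ioo a c → u ∈ Set.Ioo a b := fun hu => ⟨hu.1, hu.2.trans_le hc.2⟩
  have hgrow := exp_mul_mul_le_of_neg_mul_le_deriv hc.1
    (hg.mono (Set.Icc_subset_Icc_right hc.2)) (fun u hu => hg' u (hlt hu))
    fun u hu => hle u (hlt hu) (hpos u ⟨hu.1.le, hu.2⟩)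
  exact hgrow.not_gt ((mul_nonpos_of_nonneg_of_nonpos (Real.exp_pos _).le hgc).trans_lt
    (mul_pos (Real.exp_pos _) ha))

section SpaceTime

variable {E F : Type*} [NormedAddCommGroup E] [NormedSpace ℝ E]
  [NormedAddCommGroup F] [NormedSpace ℝ F]

theorem fderiv_prodMk_left_apply {f : E × ℝ → F} {x : E} {t : ℝ}
    (hf : DifferentiableAt ℝ f (x, t)) (e : E) :
    fderiv ℝ (fun y => f (y, t)) x e = fderiv ℝ f (x, t) (e, 0) := by
  have hslice : HasFDerivAt (fun y => f (y, t)) _ x :=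
    hf.hasFDerivAt.comp x (hasFDerivAt_prodMk_left x t)
  rw [hslice.fderiv]
  rfl

theorem deriv_prodMk_right {f : E × ℝ → F} {x : E} {t : ℝ}
    (hf : DifferentiableAt ℝ f (x, t)) :
    deriv (fun s => f (x, s)) t = fderiv ℝ f (x, t) (0, 1) :=
  (hf.hasFDerivAt.comp_hasDerivAt t ((hasDerivAt_const t x).prodMk (hasDerivAt_id t))).deriv

theorem exists_characteristic [ProperSpace E] {a b t₀ M : ℝ} (ht₀ : t₀ ∈ Set.Icc a b)
    {W : E × ℝ → E} (hW : ContDiffOn ℝ 1 W (Set.univ ×ˢ Set.Icc a b))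
    (hM : ∀ q ∈ Set.univ ×ˢ Set.Icc a b, ‖W q‖ ≤ M) (x : E) :
    ∃ X : ℝ → E, X t₀ = x ∧
      ∀ s ∈ Set.Icc a b, HasDerivWithinAt X (W (X s, s)) (Set.Icc a b) s := by
  have hM0 : 0 ≤ M := (norm_nonneg _).trans (hM (x, t₀) ⟨trivial, ht₀⟩)
  have hR0 : 0 ≤ M * (b - a) := mul_nonneg hM0 (sub_nonneg.2 (ht₀.1.trans ht₀.2))
  set ball := Metric.closedBall x (M * (b - a))
  have hsub : ball ×ˢ Set.Icc a b ⊆ Set.univ ×ˢ Set.Icc a b :=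
    Set.prod_mono_left (Set.subset_univ _)
  obtain ⟨K, hK⟩ := (hW.mono hsub).exists_lipschitzOnWith one_ne_zero
    ((convex_closedBall x _).prod (convex_Icc a b))
    ((isCompact_closedBall x _).prod isCompact_Icc)
  have hPL : IsPicardLindelof (fun s y => W (y, s)) (⟨t₀, ht₀⟩ : Set.Icc a b) x
      ⟨M * (b - a), hR0⟩ 0 ⟨M, hM0⟩ K := by
    refine ⟨fun s hs y hy z hz => ?_, fun y _ => ?_, fun s hs y _ => hM (y, s) ⟨trivial, hs⟩, ?_⟩
    · simpa [Prod.edist_eq] using hK (x := (y, s)) ⟨hy, hs⟩ (y := (z, s)) ⟨hz, hs⟩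
    · exact hW.continuousOn.comp (by fun_prop) fun s hs => ⟨trivial, hs⟩
    · rw [NNReal.coe_zero, sub_zero]
      exact mul_le_mul_of_nonneg_left
        (max_le (sub_le_sub_left ht₀.1 b) (sub_le_sub_right ht₀.2 a)) hM0
  exact hPL.exists_eq_forall_mem_Icc_hasDerivWithinAt₀

theorem pos_along_curve_of_transport {f : E × ℝ → ℝ} {X X' : ℝ → E} {c : ℝ → ℝ} {a b C : ℝ}
    (hX : ∀ s ∈ Set.Icc a b, HasDerivWithinAt X (X' s) (Set.Icc a b) s)
    (hf : ContinuousOn f (Set.univ ×ˢ Set.Icc a b))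
    (hf' : ∀ s ∈ Set.Ioo a b, DifferentiableAt ℝ f (X s, s))
    (htransport : ∀ s ∈ Set.Ioo a b, 0 < f (X s, s) →
      fderiv ℝ f (X s, s) (X' s, 1) = -c s * f (X s, s))
    (hc : ∀ s ∈ Set.Ioo a b, c s ≤ C) (ha : 0 < f (X a, a)) :
    ∀ s ∈ Set.Icc a b, 0 < f (X s, s) := by
  have hcont : ContinuousOn (fun s => f (X s, s)) (Set.Icc a b) :=
    hf.comp (ContinuousOn.prodMk (fun s hs => (hX s hs).continuousWithinAt) continuousOn_id)
      fun s hs => ⟨trivial, hs⟩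
  have hderiv : ∀ s ∈ Set.Ioo a b,
      HasDerivAt (fun s => f (X s, s)) (fderiv ℝ f (X s, s) (X' s, 1)) s := fun s hs =>
    (hf' s hs).hasFDerivAt.comp_hasDerivAt (f := fun s => (X s, s)) s
      (((hX s (Set.Ioo_subset_Icc_self hs)).hasDerivAt (Icc_mem_nhds hs.1 hs.2)).prodMk
        (hasDerivAt_id s))
  refine pos_of_neg_mul_le_deriv_of_pos (C := C) hcont hderiv (fun s hs hpos => ?_) ha
  rw [htransport s hs hpos]
  exact mul_le_mul_of_nonneg_right (neg_le_neg (hc s hs)) hpos.le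

variable {d : ℕ}

/-- The spatial divergence `Σ ∂_{x_i} V_i` of a vector field `V` on space-time `ℝ^d × ℝ`, read
off from the joint derivative of `V`. -/
def spaceDiv (V : (Fin d → ℝ) × ℝ → Fin d → ℝ) (q : (Fin d → ℝ) × ℝ) : ℝ :=
  ∑ i, fderiv ℝ V q (Pi.single i 1, 0) i

theorem spaceDiv_eq_sum_fderiv_slice {V : (Fin d → ℝ) × ℝ → Fin d → ℝ} {x : Fin d → ℝ} {t : ℝ}
    (hV : DifferentiableAt ℝ V (x, t)) :
    spaceDiv V (x, t) = ∑ i, fderiv ℝ (fun y => V (y, t) i) x (Pi.single i 1) := by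
  refine Finset.sum_congr rfl fun i _ => ?_
  rw [fderiv_prodMk_left_apply (f := fun q => V q i) (differentiableAt_pi.1 hV i),
    fderiv_apply hV]
  rfl

theorem exists_abs_spaceDiv_le_along_curve {V : (Fin d → ℝ) × ℝ → Fin d → ℝ} {a b : ℝ}
    (hab : a < b) (hV : ContDiffOn ℝ 1 V (Set.univ ×ˢ Set.Icc a b)) {X : ℝ → Fin d → ℝ}
    (hX : ContinuousOn X (Set.Icc a b)) :
    ∃ C, ∀ s ∈ Set.Ioo a b, |spaceDiv V (X s, s)| ≤ C := by
  set S : Set ((Fin d → ℝ) × ℝ) := Set.univ ×ˢ Set.Icc a b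
  have hcont : ContinuousOn (fun s => ∑ i, fderivWithin ℝ V S (X s, s) (Pi.single i 1, 0) i)
      (Set.Icc a b) := by
    have hDV : ContinuousOn (fun s => fderivWithin ℝ V S (X s, s)) (Set.Icc a b) :=
      (hV.continuousOn_fderivWithin (uniqueDiffOn_univ.prod (uniqueDiffOn_Icc hab)) le_rfl).comp
        (hX.prodMk continuousOn_id) fun s hs => ⟨trivial, hs⟩
    fun_prop
  obtain ⟨C, hC⟩ := isCompact_Icc.exists_bound_of_continuousOn hcont
  refine ⟨C, fun s hs => ?_⟩
  have hmem : S ∈ nhds (X s, s) := prod_mem_nhds Filter.univ_mem (Icc_mem_nhds hs.1 hs.2)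
  simpa [spaceDiv, fderivWithin_of_mem_nhds hmem] using hC s (Set.Ioo_subset_Icc_self hs)

theorem fderiv_apply_prodMk_one (f : (Fin d → ℝ) × ℝ → F) (q : (Fin d → ℝ) × ℝ)
    (w : Fin d → ℝ) :
    fderiv ℝ f q (w, 1)
      = fderiv ℝ f q (0, 1) + ∑ i, w i • fderiv ℝ f q (Pi.single i 1, 0) := by
  have hsplit : (w, (1 : ℝ)) = (0, 1) + ∑ i, w i • ((Pi.single i 1 : Fin d → ℝ), (0 : ℝ)) := by
    ext j
    · simp [Prod.fst_sum, Finset.sum_apply, Pi.single_apply]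
    · simp [Prod.snd_sum]
  simp only [hsplit, map_add, map_sum, map_smul]

end SpaceTime

section PrimitiveVariables

/-- The ideal equation of state `p = (γ - 1) ρ e`. -/
def idealEOS (γ : ℝ) : ℝ → ℝ → ℝ := fun ρ e => (γ - 1) * ρ * e

/-- The conservative state `(ρ, ρv, B, E)` of the primitive variables `(ρ, p, v, B)` under the
ideal equation of state. -/
def ofPrimitive (γ ρ p : ℝ) (v B : Fin 3 → ℝ) : MHDState :=
  mk ρ (fun k => ρ * v k) B (ρ * sq3 v / 2 + sq3 B / 2 + p / (γ - 1))

variable {γ ρ : ℝ} (p : ℝ) (v B : Fin 3 → ℝ)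

@[simp]
theorem dens_ofPrimitive : dens (ofPrimitive γ ρ p v B) = ρ := rfl

@[simp]
theorem magB_ofPrimitive : magB (ofPrimitive γ ρ p v B) = B := by
  funext k
  fin_cases k <;> rfl

@[simp]
theorem mom_ofPrimitive : mom (ofPrimitive γ ρ p v B) = ρ • v := by
  funext k
  fin_cases k <;> rfl

theorem vel_ofPrimitive (hρ : ρ ≠ 0) : vel (ofPrimitive γ ρ p v B) = v := by
  funext k
  simp [vel, hρ]

theorem source_ofPrimitive (hρ : ρ ≠ 0) :
    source (ofPrimitive γ ρ p v B) = mk 0 B v (dot3 v B) := by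
  rw [source, magB_ofPrimitive, vel_ofPrimitive p v B hρ]

theorem pres_ofPrimitive (hγ : γ ≠ 1) (hρ : ρ ≠ 0) :
    pres (idealEOS γ) (ofPrimitive γ ρ p v B) = p := by
  have hγ' : γ - 1 ≠ 0 := sub_ne_zero.2 hγ
  have hint : intE (ofPrimitive γ ρ p v B) = p / (γ - 1) := by
    have hkin : sq3 (ρ • v) / ρ = ρ * sq3 v := by
      simp only [sq3, dot3, Fin.sum_univ_three, Pi.smul_apply, smul_eq_mul]
      field_simp
    rw [intE, mom_ofPrimitive, dens_ofPrimitive, magB_ofPrimitive, hkin]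
    simp only [toten, ofPrimitive, mk, Matrix.cons_val]
    ring
  rw [pres, specE, hint, dens_ofPrimitive, idealEOS]
  field_simp

theorem flux_ofPrimitive (hγ : γ ≠ 1) (hρ : ρ ≠ 0) (i : Fin 3) :
    flux (idealEOS γ) i (ofPrimitive γ ρ p v B)
      = v i • ofPrimitive γ ρ p v B + (p + sq3 B / 2) • mk 0 (Pi.single i 1) 0 (v i)
        - B i • mk 0 B v (dot3 v B) := by
  rw [flux, vel_ofPrimitive p v B hρ, ptot, pres_ofPrimitive p v B hγ hρ, magB_ofPrimitive,
    dens_ofPrimitive]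
  funext a
  fin_cases a <;>
    simp only [ofPrimitive, mk, toten, Pi.single_apply, Pi.add_apply, Pi.sub_apply, Pi.smul_apply,
      Pi.zero_apply, smul_eq_mul, Matrix.cons_val, Fin.reduceFinMk, Fin.zero_eta, Fin.mk_one,
      Fin.isValue] <;>
    ring

variable (vs Bs : Fin 3 → ℝ)

theorem nstar_dotProduct_ofPrimitive :
    nstar vs Bs ⬝ᵥ ofPrimitive γ ρ p v B
      = ρ * sq3 (v - vs) / 2 + sq3 (B - Bs) / 2 + p / (γ - 1) - sq3 Bs / 2 := by
  simp only [nstar, ofPrimitive, mk, sq3, dot3, dotProduct, Fin.sum_univ_eight,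
    Fin.sum_univ_three, Matrix.cons_val, Pi.sub_apply]
  ring

theorem nstar_dotProduct_powell :
    nstar vs Bs ⬝ᵥ mk 0 B v (dot3 v B) = dot3 (v - vs) (B - Bs) - dot3 vs Bs := by
  simp only [nstar, mk, dot3, dotProduct, Fin.sum_univ_eight, Fin.sum_univ_three,
    Matrix.cons_val, Pi.sub_apply]
  ring

theorem nstar_self_dotProduct_ofPrimitive :
    nstar v B ⬝ᵥ ofPrimitive γ ρ p v B = p / (γ - 1) - sq3 B / 2 := by
  simp [nstar_dotProduct_ofPrimitive, sq3, dot3]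

theorem nstar_self_dotProduct_powell :
    nstar v B ⬝ᵥ mk 0 B v (dot3 v B) = -dot3 v B := by
  rw [nstar_dotProduct_powell, sub_self]
  simp [dot3]

theorem nstar_dotProduct_pressure_work (i : Fin 3) :
    nstar vs Bs ⬝ᵥ mk 0 (Pi.single i 1) 0 (v i) = v i - vs i := by
  have hsingle : ∑ k, vs k * (Pi.single i 1 : Fin 3 → ℝ) k = vs i := dotProduct_single_one vs i
  rw [← hsingle]
  simp only [nstar, mk, dotProduct, Fin.sum_univ_eight, Fin.sum_univ_three, Matrix.cons_val,
    Pi.zero_apply]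
  ring

end PrimitiveVariables

theorem eventuallyEq_flux_ofPrimitive {X : Type*} [TopologicalSpace X] {γ : ℝ} {ρ p : X → ℝ}
    {v B : X → Fin 3 → ℝ} {x : X} (hγ : γ ≠ 1) (hρ : ContinuousAt ρ x) (hρx : ρ x ≠ 0)
    (i : Fin 3) :
    (fun y => flux (idealEOS γ) i (ofPrimitive γ (ρ y) (p y) (v y) (B y))) =ᶠ[nhds x]
      fun y => v y i • ofPrimitive γ (ρ y) (p y) (v y) (B y)
        + (p y + sq3 (B y) / 2) • mk 0 (Pi.single i 1) 0 (v y i)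
        - B y i • mk 0 (B y) (v y) (dot3 (v y) (B y)) := by
  filter_upwards [hρ.eventually_ne hρx] with y hy
  exact flux_ofPrimitive (p y) (v y) (B y) hγ hy i

section FieldDerivatives

variable {F : Type*} [NormedAddCommGroup F] [NormedSpace ℝ F] {x : F}

theorem fderiv_const_dotProduct {ι : Type*} [Fintype ι] (n : ι → ℝ) {f : F → ι → ℝ}
    (hf : DifferentiableAt ℝ f x) (e : F) :
    fderiv ℝ (fun y => n ⬝ᵥ f y) x e = n ⬝ᵥ fderiv ℝ f x e := by
  have hsum : HasFDerivAt (fun y => n ⬝ᵥ f y) _ x := HasFDerivAt.fun_sum fun k _ =>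
    (hasFDerivAt_pi'.1 hf.hasFDerivAt k).const_mul (n k)
  rw [hsum.fderiv]
  simp [dotProduct]

theorem hasFDerivAt_dotProduct_sub_self {ι : Type*} [Fintype ι] {f g : F → ι → ℝ}
    (hf : DifferentiableAt ℝ f x) (hg : DifferentiableAt ℝ g x) :
    HasFDerivAt (fun y => (f y - f x) ⬝ᵥ (g y - g x)) (0 : F →L[ℝ] ℝ) x := by
  have hsum : HasFDerivAt (fun y => (f y - f x) ⬝ᵥ (g y - g x)) _ x :=
    HasFDerivAt.fun_sum fun k _ =>
      ((hasFDerivAt_pi'.1 hf.hasFDerivAt k).sub_const (f x k)).fun_mul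
        ((hasFDerivAt_pi'.1 hg.hasFDerivAt k).sub_const (g x k))
  exact hsum.congr_fderiv (by simp)

theorem differentiableAt_mk {ρ E : F → ℝ} {m B : F → Fin 3 → ℝ} (hρ : DifferentiableAt ℝ ρ x)
    (hm : DifferentiableAt ℝ m x) (hB : DifferentiableAt ℝ B x) (hE : DifferentiableAt ℝ E x) :
    DifferentiableAt ℝ (fun y => mk (ρ y) (m y) (B y) (E y)) x := by
  rw [differentiableAt_pi] at *
  intro a
  fin_cases a
  exacts [hρ, hm 0, hm 1, hm 2, hB 0, hB 1, hB 2, hE]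

theorem differentiableAt_dot3 {v B : F → Fin 3 → ℝ} (hv : DifferentiableAt ℝ v x)
    (hB : DifferentiableAt ℝ B x) : DifferentiableAt ℝ (fun y => dot3 (v y) (B y)) x := by
  simp only [dot3]
  fun_prop

theorem differentiableAt_sq3 {B : F → Fin 3 → ℝ} (hB : DifferentiableAt ℝ B x) :
    DifferentiableAt ℝ (fun y => sq3 (B y)) x :=
  differentiableAt_dot3 hB hB

variable {γ : ℝ} {ρ p : F → ℝ} {v B : F → Fin 3 → ℝ}

theorem differentiableAt_ofPrimitive (hρ : DifferentiableAt ℝ ρ x)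
    (hp : DifferentiableAt ℝ p x) (hv : DifferentiableAt ℝ v x) (hB : DifferentiableAt ℝ B x) :
    DifferentiableAt ℝ (fun y => ofPrimitive γ (ρ y) (p y) (v y) (B y)) x := by
  have hv2 := differentiableAt_sq3 hv
  have hB2 := differentiableAt_sq3 hB
  exact differentiableAt_mk hρ (by fun_prop) hB (by fun_prop)

theorem differentiableAt_flux_ofPrimitive (hγ : γ ≠ 1) (hρ : DifferentiableAt ℝ ρ x)
    (hp : DifferentiableAt ℝ p x) (hv : DifferentiableAt ℝ v x) (hB : DifferentiableAt ℝ B x)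
    (hρx : ρ x ≠ 0) (i : Fin 3) :
    DifferentiableAt ℝ
      (fun y => flux (idealEOS γ) i (ofPrimitive γ (ρ y) (p y) (v y) (B y))) x := by
  have hvi := differentiableAt_pi.1 hv i
  have hadvection := hvi.fun_smul (differentiableAt_ofPrimitive (γ := γ) hρ hp hv hB)
  have hpressure := (hp.fun_add ((differentiableAt_sq3 hB).mul_const 2⁻¹)).fun_smul
    (differentiableAt_mk (differentiableAt_const (0 : ℝ))
      (differentiableAt_const (Pi.single i 1)) (differentiableAt_const 0) hvi)
  have htension := (differentiableAt_pi.1 hB i).fun_smul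
    (differentiableAt_mk (differentiableAt_const (0 : ℝ)) hB hv (differentiableAt_dot3 hv hB))
  exact ((hadvection.fun_add hpressure).fun_sub htension).congr_of_eventuallyEq
    (eventuallyEq_flux_ofPrimitive hγ hρ.continuousAt hρx i)

theorem hasFDerivAt_nstar_dotProduct_ofPrimitive (hρ : DifferentiableAt ℝ ρ x)
    (hp : DifferentiableAt ℝ p x) (hv : DifferentiableAt ℝ v x) (hB : DifferentiableAt ℝ B x) :
    HasFDerivAt (fun y => nstar (v x) (B x) ⬝ᵥ ofPrimitive γ (ρ y) (p y) (v y) (B y))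
      ((γ - 1)⁻¹ • fderiv ℝ p x) x := by
  have hkin : HasFDerivAt (fun y => sq3 (v y - v x)) 0 x := hasFDerivAt_dotProduct_sub_self hv hv
  have hmag : HasFDerivAt (fun y => sq3 (B y - B x)) 0 x := hasFDerivAt_dotProduct_sub_self hB hB
  simp only [nstar_dotProduct_ofPrimitive, div_eq_mul_inv]
  refine (((((hρ.hasFDerivAt.fun_mul hkin).mul_const 2⁻¹).fun_add (hmag.mul_const 2⁻¹)).fun_add
    (hp.hasFDerivAt.mul_const (γ - 1)⁻¹)).sub_const (sq3 (B x) * 2⁻¹)).congr_fderiv ?_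
  simp [sq3, dot3]

theorem hasFDerivAt_nstar_dotProduct_powell (hv : DifferentiableAt ℝ v x)
    (hB : DifferentiableAt ℝ B x) :
    HasFDerivAt (fun y => nstar (v x) (B x) ⬝ᵥ mk 0 (B y) (v y) (dot3 (v y) (B y)))
      (0 : F →L[ℝ] ℝ) x := by
  simp only [nstar_dotProduct_powell]
  exact (hasFDerivAt_dotProduct_sub_self hv hB).sub_const (dot3 (v x) (B x))

theorem fderiv_nstar_dotProduct_flux (hγ : γ ≠ 1) (hρ : DifferentiableAt ℝ ρ x)
    (hp : DifferentiableAt ℝ p x) (hv : DifferentiableAt ℝ v x) (hB : DifferentiableAt ℝ B x)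
    (hρx : ρ x ≠ 0) (i : Fin 3) (e : F) :
    fderiv ℝ (fun y => nstar (v x) (B x) ⬝ᵥ
        flux (idealEOS γ) i (ofPrimitive γ (ρ y) (p y) (v y) (B y))) x e
      = (γ - 1)⁻¹ * (v x i * fderiv ℝ p x e + γ * p x * fderiv ℝ v x e i)
        + fderiv ℝ B x e i * dot3 (v x) (B x) := by
  have hγ' : γ - 1 ≠ 0 := sub_ne_zero.2 hγ
  have hvi := hasFDerivAt_pi'.1 hv.hasFDerivAt i
  have hBi := hasFDerivAt_pi'.1 hB.hasFDerivAt i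
  have hptot := (hp.fun_add ((differentiableAt_sq3 hB).mul_const 2⁻¹)).hasFDerivAt
  have hflux := ((hvi.fun_mul
    (hasFDerivAt_nstar_dotProduct_ofPrimitive (γ := γ) hρ hp hv hB)).fun_add
    (hptot.fun_mul (hvi.sub_const (v x i)))).fun_sub
    (hBi.fun_mul (hasFDerivAt_nstar_dotProduct_powell hv hB))
  have heq : (fun y => nstar (v x) (B x) ⬝ᵥ
        flux (idealEOS γ) i (ofPrimitive γ (ρ y) (p y) (v y) (B y))) =ᶠ[nhds x]
      fun y => v y i * (nstar (v x) (B x) ⬝ᵥ ofPrimitive γ (ρ y) (p y) (v y) (B y))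
        + (p y + sq3 (B y) * 2⁻¹) * (v y i - v x i)
        - B y i * (nstar (v x) (B x) ⬝ᵥ mk 0 (B y) (v y) (dot3 (v y) (B y))) := by
    filter_upwards [eventuallyEq_flux_ofPrimitive hγ hρ.continuousAt hρx i] with y hy
    rw [hy, dotProduct_sub, dotProduct_add, dotProduct_smul, dotProduct_smul, dotProduct_smul,
      nstar_dotProduct_pressure_work]
    rfl
  rw [heq.fderiv_eq, hflux.fderiv]
  simp only [nstar_self_dotProduct_ofPrimitive, nstar_self_dotProduct_powell, add_apply,
    sub_apply, smul_apply, smul_eq_mul, ContinuousLinearMap.comp_apply,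
    ContinuousLinearMap.proj_apply, zero_apply, sub_self]
  field_simp
  ring

end FieldDerivatives

section GodunovSystem

variable {d : ℕ} {hd : d ≤ 3} {x : Fin d → ℝ} {t : ℝ}

/-- The symmetrizable (Godunov) MHD system `∂ₜU + Σ ∂_{xᵢ}Fᵢ(U) = -(∇·B) S(U)` at the point
`(x, t)`, written with one-variable partial derivatives of each of the eight components. -/
def SolvesGodunovAt (pfun : ℝ → ℝ → ℝ) (hd : d ≤ 3) (U : (Fin d → ℝ) × ℝ → MHDState)
    (x : Fin d → ℝ) (t : ℝ) : Prop :=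
  ∀ a : Fin 8,
    deriv (fun s => U (x, s) a) t
      + ∑ i : Fin d,
        fderiv ℝ (fun y => flux pfun (Fin.castLE hd i) (U (y, t)) a) x (Pi.single i 1)
    = -(∑ i : Fin d,
        fderiv ℝ (fun y => magB (U (y, t)) (Fin.castLE hd i)) x (Pi.single i 1)) *
      source (U (x, t)) a

theorem differentiableAt_magB {F : Type*} [NormedAddCommGroup F] [NormedSpace ℝ F]
    {U : F → MHDState} {q : F} (hU : DifferentiableAt ℝ U q) :
    DifferentiableAt ℝ (fun y => magB (U y)) q := by
  rw [differentiableAt_pi] at *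
  intro k
  fin_cases k
  exacts [hU 4, hU 5, hU 6]

theorem spaceDiv_comp_castLE {v : (Fin d → ℝ) × ℝ → Fin 3 → ℝ} {q : (Fin d → ℝ) × ℝ}
    (hv : DifferentiableAt ℝ v q) :
    spaceDiv (fun q => v q ∘ Fin.castLE hd) q
      = ∑ i, fderiv ℝ v q (Pi.single i 1, 0) (Fin.castLE hd i) := by
  have hcomp : HasFDerivAt (fun q => v q ∘ Fin.castLE hd) _ q :=
    hasFDerivAt_pi.2 fun i => hasFDerivAt_pi'.1 hv.hasFDerivAt (Fin.castLE hd i)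
  simp only [spaceDiv, hcomp.fderiv]
  rfl

theorem SolvesGodunovAt.fderiv_add_sum_fderiv_flux {pfun : ℝ → ℝ → ℝ}
    {U : (Fin d → ℝ) × ℝ → MHDState} (h : SolvesGodunovAt pfun hd U x t)
    (hU : DifferentiableAt ℝ U (x, t))
    (hflux : ∀ i, DifferentiableAt ℝ (fun q => flux pfun i (U q)) (x, t)) :
    fderiv ℝ U (x, t) (0, 1)
      + ∑ i : Fin d,
        fderiv ℝ (fun q => flux pfun (Fin.castLE hd i) (U q)) (x, t) (Pi.single i 1, 0)
    = -spaceDiv (fun q => magB (U q) ∘ Fin.castLE hd) (x, t) • source (U (x, t)) := by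
  have hB : DifferentiableAt ℝ (fun q => magB (U q) ∘ Fin.castLE hd) (x, t) :=
    differentiableAt_pi.2 fun i => differentiableAt_pi.1 (differentiableAt_magB hU) _
  funext a
  have htime : deriv (fun s => U (x, s) a) t = fderiv ℝ U (x, t) (0, 1) a := by
    rw [deriv_prodMk_right (f := fun q => U q a) (differentiableAt_pi.1 hU a), fderiv_apply hU]
    rfl
  have hspace : ∀ i : Fin d,
      fderiv ℝ (fun y => flux pfun (Fin.castLE hd i) (U (y, t)) a) x (Pi.single i 1)
        = fderiv ℝ (fun q => flux pfun (Fin.castLE hd i) (U q)) (x, t) (Pi.single i 1, 0) a := by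
    intro i
    rw [fderiv_prodMk_left_apply (f := fun q => flux pfun (Fin.castLE hd i) (U q) a)
      (differentiableAt_pi.1 (hflux _) a), fderiv_apply (hflux _)]
    rfl
  have ha := h a
  simp only [htime, hspace] at ha
  simpa [spaceDiv_eq_sum_fderiv_slice hB] using ha

theorem SolvesGodunovAt.dotProduct {pfun : ℝ → ℝ → ℝ} {U : (Fin d → ℝ) × ℝ → MHDState}
    (h : SolvesGodunovAt pfun hd U x t) (hU : DifferentiableAt ℝ U (x, t))
    (hflux : ∀ i, DifferentiableAt ℝ (fun q => flux pfun i (U q)) (x, t)) (n : MHDState) :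
    fderiv ℝ (fun q => n ⬝ᵥ U q) (x, t) (0, 1)
      + ∑ i : Fin d,
        fderiv ℝ (fun q => n ⬝ᵥ flux pfun (Fin.castLE hd i) (U q)) (x, t) (Pi.single i 1, 0)
    = -spaceDiv (fun q => magB (U q) ∘ Fin.castLE hd) (x, t) * n ⬝ᵥ source (U (x, t)) := by
  simp only [fderiv_const_dotProduct n hU, fderiv_const_dotProduct n (hflux _)]
  rw [← dotProduct_sum, ← dotProduct_add, h.fderiv_add_sum_fderiv_flux hU hflux,
    dotProduct_smul, smul_eq_mul]

variable {γ : ℝ} {ρ p : (Fin d → ℝ) × ℝ → ℝ} {v B : (Fin d → ℝ) × ℝ → Fin 3 → ℝ}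

theorem SolvesGodunovAt.mass_balance
    (h : SolvesGodunovAt (idealEOS γ) hd (fun q => ofPrimitive γ (ρ q) (p q) (v q) (B q)) x t)
    (hγ : γ ≠ 1) (hρ : DifferentiableAt ℝ ρ (x, t)) (hp : DifferentiableAt ℝ p (x, t))
    (hv : DifferentiableAt ℝ v (x, t)) (hB : DifferentiableAt ℝ B (x, t)) (hρ0 : ρ (x, t) ≠ 0) :
    fderiv ℝ ρ (x, t) (v (x, t) ∘ Fin.castLE hd, 1)
      = -spaceDiv (fun q => v q ∘ Fin.castLE hd) (x, t) * ρ (x, t) := by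
  have hpair := h.dotProduct (differentiableAt_ofPrimitive hρ hp hv hB)
    (differentiableAt_flux_ofPrimitive hγ hρ hp hv hB hρ0) (Pi.single 0 1)
  have hmassflux : ∀ i, (fun q => flux (idealEOS γ) i (ofPrimitive γ (ρ q) (p q) (v q) (B q)) 0)
      =ᶠ[nhds (x, t)] fun q => ρ q * v q i := fun i => by
    filter_upwards [hρ.continuousAt.eventually_ne hρ0] with q hq
    simp [flux, mk, vel_ofPrimitive _ _ _ hq]
  have hmassflux' : ∀ i e, fderiv ℝ (fun q => ρ q * v q i) (x, t) e
      = ρ (x, t) * fderiv ℝ v (x, t) e i + v (x, t) i * fderiv ℝ ρ (x, t) e := fun i e => by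
    rw [(hρ.hasFDerivAt.fun_mul (hasFDerivAt_pi'.1 hv.hasFDerivAt i)).fderiv]
    rfl
  have hdens : ∀ q, ofPrimitive γ (ρ q) (p q) (v q) (B q) 0 = ρ q := fun q => rfl
  simp only [single_one_dotProduct, (hmassflux _).fderiv_eq, hmassflux', hdens, source, mk,
    Matrix.cons_val_zero, mul_zero, Finset.sum_add_distrib, ← Finset.mul_sum] at hpair
  rw [fderiv_apply_prodMk_one, spaceDiv_comp_castLE hv]
  simp only [Function.comp_apply, smul_eq_mul]
  linear_combination hpair

theorem SolvesGodunovAt.pressure_balance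
    (h : SolvesGodunovAt (idealEOS γ) hd (fun q => ofPrimitive γ (ρ q) (p q) (v q) (B q)) x t)
    (hγ : γ ≠ 1) (hρ : DifferentiableAt ℝ ρ (x, t)) (hp : DifferentiableAt ℝ p (x, t))
    (hv : DifferentiableAt ℝ v (x, t)) (hB : DifferentiableAt ℝ B (x, t)) (hρ0 : ρ (x, t) ≠ 0) :
    fderiv ℝ p (x, t) (v (x, t) ∘ Fin.castLE hd, 1)
      = -(γ * spaceDiv (fun q => v q ∘ Fin.castLE hd) (x, t)) * p (x, t) := by
  have hγ' : γ - 1 ≠ 0 := sub_ne_zero.2 hγ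
  have hpair := h.dotProduct (differentiableAt_ofPrimitive hρ hp hv hB)
    (differentiableAt_flux_ofPrimitive hγ hρ hp hv hB hρ0) (nstar (v (x, t)) (B (x, t)))
  have hsource : nstar (v (x, t)) (B (x, t)) ⬝ᵥ
      source (ofPrimitive γ (ρ (x, t)) (p (x, t)) (v (x, t)) (B (x, t)))
        = -dot3 (v (x, t)) (B (x, t)) := by
    rw [source_ofPrimitive _ _ _ hρ0, nstar_self_dotProduct_powell]
  simp only [fderiv_nstar_dotProduct_flux hγ hρ hp hv hB hρ0, hsource, magB_ofPrimitive,
    (hasFDerivAt_nstar_dotProduct_ofPrimitive hρ hp hv hB).fderiv, spaceDiv_comp_castLE hB,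
    Finset.sum_add_distrib, ← Finset.mul_sum, ← Finset.sum_mul, smul_apply, smul_eq_mul] at hpair
  rw [fderiv_apply_prodMk_one, spaceDiv_comp_castLE hv]
  simp only [Function.comp_apply, smul_eq_mul]
  field_simp at hpair
  linear_combination hpair

theorem abs_le_norm3 (w : Fin 3 → ℝ) (k : Fin 3) : |w k| ≤ norm3 w :=
  Real.abs_le_sqrt <| (sq (w k)).trans_le <|
    Finset.single_le_sum (f := fun k => w k * w k) (fun k _ => mul_self_nonneg (w k))
      (Finset.mem_univ k)

theorem norm_comp_castLE_le_norm3 (hd : d ≤ 3) (w : Fin 3 → ℝ) :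
    ‖w ∘ Fin.castLE hd‖ ≤ norm3 w :=
  (pi_norm_le_iff_of_nonneg (Real.sqrt_nonneg _)).2 fun i => abs_le_norm3 w (Fin.castLE hd i)

theorem pos_of_solvesGodunovAt_Ioo {b : ℝ} (hb : 0 < b) (hγ : γ ≠ 1)
    (hρ : ContinuousOn ρ (Set.univ ×ˢ Set.Icc 0 b)) (hp : ContinuousOn p (Set.univ ×ˢ Set.Icc 0 b))
    (hρ' : ∀ q ∈ Set.univ ×ˢ Set.Ioo 0 b, DifferentiableAt ℝ ρ q)
    (hp' : ∀ q ∈ Set.univ ×ˢ Set.Ioo 0 b, DifferentiableAt ℝ p q)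
    (hB' : ∀ q ∈ Set.univ ×ˢ Set.Ioo 0 b, DifferentiableAt ℝ B q)
    (hv : ContDiffOn ℝ 1 v (Set.univ ×ˢ Set.Icc 0 b))
    (hvbdd : ∃ M, ∀ q ∈ Set.univ ×ˢ Set.Icc 0 b, norm3 (v q) ≤ M)
    (hsys : ∀ x, ∀ t ∈ Set.Ioo 0 b, SolvesGodunovAt (idealEOS γ) hd
      (fun q => ofPrimitive γ (ρ q) (p q) (v q) (B q)) x t)
    (hinit : ∀ x, 0 < ρ (x, 0) ∧ 0 < p (x, 0)) (x : Fin d → ℝ) :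
    0 < ρ (x, b) ∧ 0 < p (x, b) := by
  have hV : ContDiffOn ℝ 1 (fun q => v q ∘ Fin.castLE hd) (Set.univ ×ˢ Set.Icc 0 b) :=
    contDiffOn_pi.2 fun i => contDiffOn_pi.1 hv (Fin.castLE hd i)
  have hv' : ∀ q ∈ Set.univ ×ˢ Set.Ioo 0 b, DifferentiableAt ℝ v q := fun q hq =>
    (hv.differentiableOn one_ne_zero).differentiableAt
      (prod_mem_nhds Filter.univ_mem (Icc_mem_nhds hq.2.1 hq.2.2))
  obtain ⟨M, hM⟩ := hvbdd
  obtain ⟨X, rfl, hX⟩ := exists_characteristic (Set.right_mem_Icc.2 hb.le) hV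
    (fun q hq => (norm_comp_castLE_le_norm3 hd (v q)).trans (hM q hq)) x
  obtain ⟨C, hC⟩ := exists_abs_spaceDiv_le_along_curve hb hV
    (fun s hs => (hX s hs).continuousWithinAt)
  have hin : ∀ s ∈ Set.Ioo 0 b, (X s, s) ∈ Set.univ ×ˢ Set.Ioo 0 b := fun s hs => ⟨trivial, hs⟩
  have hρpos : ∀ s ∈ Set.Icc 0 b, 0 < ρ (X s, s) :=
    pos_along_curve_of_transport hX hρ (fun s hs => hρ' _ (hin s hs))
      (fun s hs hpos => (hsys _ s hs).mass_balance hγ (hρ' _ (hin s hs)) (hp' _ (hin s hs))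
        (hv' _ (hin s hs)) (hB' _ (hin s hs)) hpos.ne')
      (fun s hs => le_of_abs_le (hC s hs)) (hinit _).1
  have hγC : ∀ s ∈ Set.Ioo 0 b,
      γ * spaceDiv (fun q => v q ∘ Fin.castLE hd) (X s, s) ≤ |γ| * C := fun s hs =>
    (le_abs_self _).trans <| (abs_mul _ _).trans_le <|
      mul_le_mul_of_nonneg_left (hC s hs) (abs_nonneg γ)
  have hppos : ∀ s ∈ Set.Icc 0 b, 0 < p (X s, s) :=
    pos_along_curve_of_transport hX hp (fun s hs => hp' _ (hin s hs))
      (fun s hs _ => (hsys _ s hs).pressure_balance hγ (hρ' _ (hin s hs)) (hp' _ (hin s hs))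
        (hv' _ (hin s hs)) (hB' _ (hin s hs)) (hρpos s (Set.Ioo_subset_Icc_self hs)).ne')
      hγC (hinit _).2
  exact ⟨hρpos b (Set.right_mem_Icc.2 hb.le), hppos b (Set.right_mem_Icc.2 hb.le)⟩

end GodunovSystem

theorem differentiableAt_of_contDiffOn_setOf_nonneg_lt {E F : Type*} [NormedAddCommGroup E]
    [NormedSpace ℝ E] [NormedAddCommGroup F] [NormedSpace ℝ F] {T : EReal} {f : E × ℝ → F}
    (hf : ContDiffOn ℝ 1 f {q | 0 ≤ q.2 ∧ (q.2 : EReal) < T}) (x : E) (t : ℝ) (ht : 0 < t)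
    (htT : (t : EReal) < T) : DifferentiableAt ℝ f (x, t) := by
  have hpos : ∀ᶠ q : E × ℝ in nhds (x, t), 0 < q.2 :=
    continuousAt_snd.eventually (lt_mem_nhds ht)
  have hlt : ∀ᶠ q : E × ℝ in nhds (x, t), (q.2 : EReal) < T :=
    (continuous_coe_real_ereal.comp continuous_snd).continuousAt.eventually (gt_mem_nhds htT)
  refine (hf.differentiableOn one_ne_zero).differentiableAt ?_
  filter_upwards [hpos, hlt] with q hq hqT using ⟨hq.le, hqT⟩

theorem strong_solution_positivity_general {d : ℕ} (hd : d ≤ 3) {γ : ℝ} (hγ : γ ≠ 1) {T : EReal}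
    {ρ p : (Fin d → ℝ) × ℝ → ℝ} {v B : (Fin d → ℝ) × ℝ → Fin 3 → ℝ}
    (hρ : ContinuousOn ρ {q | 0 ≤ q.2 ∧ (q.2 : EReal) < T})
    (hp : ContinuousOn p {q | 0 ≤ q.2 ∧ (q.2 : EReal) < T})
    (hρ' : ∀ x, ∀ t : ℝ, 0 < t → (t : EReal) < T → DifferentiableAt ℝ ρ (x, t))
    (hp' : ∀ x, ∀ t : ℝ, 0 < t → (t : EReal) < T → DifferentiableAt ℝ p (x, t))
    (hB' : ∀ x, ∀ t : ℝ, 0 < t → (t : EReal) < T → DifferentiableAt ℝ B (x, t))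
    (hv : ContDiffOn ℝ 1 v {q | 0 ≤ q.2 ∧ (q.2 : EReal) < T})
    (hvbdd : ∀ τ : ℝ, 0 ≤ τ → (τ : EReal) < T →
      ∃ M : ℝ, ∀ x, ∀ t ∈ Set.Icc (0 : ℝ) τ, norm3 (v (x, t)) ≤ M)
    (hsys : ∀ x, ∀ t : ℝ, 0 < t → (t : EReal) < T → SolvesGodunovAt (idealEOS γ) hd
      (fun q => ofPrimitive γ (ρ q) (p q) (v q) (B q)) x t)
    (hinit : ∀ x, 0 < ρ (x, 0) ∧ 0 < p (x, 0)) :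
    ∀ x, ∀ t : ℝ, 0 ≤ t → (t : EReal) < T → 0 < ρ (x, t) ∧ 0 < p (x, t) := by
  intro x b hb hbT
  rcases hb.eq_or_lt with rfl | hb0
  · exact hinit x
  have hlt : ∀ {t : ℝ}, t ≤ b → (t : EReal) < T := fun h => (EReal.coe_le_coe h).trans_lt hbT
  have hslab : Set.univ ×ˢ Set.Icc 0 b ⊆ {q : (Fin d → ℝ) × ℝ | 0 ≤ q.2 ∧ (q.2 : EReal) < T} :=
    fun q hq => ⟨hq.2.1, hlt hq.2.2⟩
  obtain ⟨M, hM⟩ := hvbdd b hb hbT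
  exact pos_of_solvesGodunovAt_Ioo hb0 hγ (hρ.mono hslab) (hp.mono hslab)
    (fun q hq => hρ' _ _ hq.2.1 (hlt hq.2.2.le)) (fun q hq => hp' _ _ hq.2.1 (hlt hq.2.2.le))
    (fun q hq => hB' _ _ hq.2.1 (hlt hq.2.2.le)) (hv.mono hslab)
    ⟨M, fun q hq => hM q.1 q.2 hq.2⟩ (fun x t ht => hsys x t ht.1 (hlt ht.2.le)) hinit x

/-- Appendix A: positivity of strong (classical C¹) solutions of the
symmetrizable (Godunov) MHD system with the ideal EOS `p = (γ−1)ρe`,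
even without the divergence-free constraint.  Time horizon `T ∈ EReal`
allows `T = ∞`. -/
theorem strong_solution_positivity
    {d : ℕ} (hd1 : 1 ≤ d) (hd : d ≤ 3)
    (γ : ℝ) (hγ : 1 < γ)
    (T : EReal) (hT : 0 < T)
    (ρf pf : (Fin d → ℝ) → ℝ → ℝ)
    (vf Bf : (Fin d → ℝ) → ℝ → Fin 3 → ℝ)
    (Uf : (Fin d → ℝ) → ℝ → MHDState)
    (hUf : ∀ x t, Uf x t =
      mk (ρf x t) (fun k => ρf x t * vf x t k) (Bf x t)
        (ρf x t * sq3 (vf x t) / 2 + sq3 (Bf x t) / 2 + pf x t / (γ - 1)))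
    -- C¹ regularity of ρ, v, B, p on ℝ^d × [0, T)
    (hρreg : ContDiffOn ℝ 1 (fun q : (Fin d → ℝ) × ℝ => ρf q.1 q.2)
      {q : (Fin d → ℝ) × ℝ | 0 ≤ q.2 ∧ (q.2 : EReal) < T})
    (hvreg : ∀ k, ContDiffOn ℝ 1 (fun q : (Fin d → ℝ) × ℝ => vf q.1 q.2 k)
      {q : (Fin d → ℝ) × ℝ | 0 ≤ q.2 ∧ (q.2 : EReal) < T})
    (hBreg : ∀ k, ContDiffOn ℝ 1 (fun q : (Fin d → ℝ) × ℝ => Bf q.1 q.2 k)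
      {q : (Fin d → ℝ) × ℝ | 0 ≤ q.2 ∧ (q.2 : EReal) < T})
    (hpreg : ContDiffOn ℝ 1 (fun q : (Fin d → ℝ) × ℝ => pf q.1 q.2)
      {q : (Fin d → ℝ) × ℝ | 0 ≤ q.2 ∧ (q.2 : EReal) < T})
    -- v bounded on ℝ^d × [0, τ] for every 0 ≤ τ < T
    (hvbdd : ∀ τ : ℝ, 0 ≤ τ → (τ : EReal) < T →
      ∃ M : ℝ, ∀ x, ∀ t ∈ Set.Icc (0 : ℝ) τ, norm3 (vf x t) ≤ M)
    -- the symmetrizable (Godunov) MHD system holds classically on ℝ^d × (0, T)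
    (hPDE : ∀ x : Fin d → ℝ, ∀ t : ℝ, 0 < t → (t : EReal) < T → ∀ a : Fin 8,
      deriv (fun s => Uf x s a) t
        + (∑ i : Fin d,
            fderiv ℝ
              (fun y => flux (fun r e => (γ - 1) * r * e) (Fin.castLE hd i) (Uf y t) a)
              x (Pi.single i 1))
      = -(∑ i : Fin d,
            fderiv ℝ (fun y => Bf y t (Fin.castLE hd i)) x (Pi.single i 1)) *
          source (Uf x t) a)
    -- initial positivity
    (hinit : ∀ x, 0 < ρf x 0 ∧ 0 < pf x 0) :
    ∀ x, ∀ t : ℝ, 0 ≤ t → (t : EReal) < T → 0 < ρf x t ∧ 0 < pf x t := by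
  obtain rfl : Uf = fun x t => ofPrimitive γ (ρf x t) (pf x t) (vf x t) (Bf x t) := funext₂ hUf
  refine strong_solution_positivity_general (ρ := fun q => ρf q.1 q.2)
    (p := fun q => pf q.1 q.2) (v := fun q => vf q.1 q.2) (B := fun q => Bf q.1 q.2) hd hγ.ne'
    hρreg.continuousOn hpreg.continuousOn
    (differentiableAt_of_contDiffOn_setOf_nonneg_lt hρreg)
    (differentiableAt_of_contDiffOn_setOf_nonneg_lt hpreg)
    (differentiableAt_of_contDiffOn_setOf_nonneg_lt (contDiffOn_pi.2 hBreg))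
    (contDiffOn_pi.2 hvreg) hvbdd (fun x t ht htT => ?_) hinit
  intro a
  simp only [magB_ofPrimitive]
  exact hPDE x t ht htT a

end MHD
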